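/- arXiv:1211.3692 — 4 statements merged into one kernel-verified Lean document; each statement's English description precedes it below -/
import Mathlib

section
/- Let n be a positive integer, let d be a positive divisor of n, and let ζ′ ∈ ℂ be a root of unity whose multiplicative order is exactly d. Then (−1)^{n − n/d} · ζ′^{n(n−1)/2} = 1. -/
/-!
By Vieta, the product `1 · ζ ⋯ ζ ^ (d - 1)` of all roots of `X ^ d - 1` is `(-1) ^ (d - 1)`.
Since `0 + 1 + ⋯ + (n - 1) = n (n - 1) / 2`, the power `ζ ^ (n (n - 1) / 2)` is the product of the
first `n` powers of `ζ`, that is, of `n / d` full periods. It therefore equals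
`(-1) ^ ((d - 1) (n / d)) = (-1) ^ (n - n / d)`, a sign whose square is `1`.
-/

open Finset Polynomial

theorem prod_range_mul_of_periodic {M : Type*} [CommMonoid M] {f : ℕ → M} {d : ℕ}
    (hf : Function.Periodic f d) (m : ℕ) :
    ∏ i ∈ range (d * m), f i = (∏ i ∈ range d, f i) ^ m := by
  induction m with
  | zero => simp
  | succ m ih =>
    have last_period (i : ℕ) : f (d * m + i) = f i := by
      rw [add_comm, mul_comm, ← smul_eq_mul, hf.nsmul m i]
    simp only [Nat.mul_succ, prod_range_add, ih, last_period, pow_succ]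

theorem periodic_pow_of_pow_eq_one {M : Type*} [Monoid M] {x : M} {d : ℕ} (hx : x ^ d = 1) :
    Function.Periodic (x ^ ·) d := fun i ↦ by
  simp only [pow_add, hx, mul_one]

theorem pow_mul_pred_div_two_eq_prod_range {M : Type*} [CommMonoid M] (x : M) (n : ℕ) :
    x ^ (n * (n - 1) / 2) = ∏ i ∈ range n, x ^ i := by
  rw [prod_pow_eq_pow_sum, sum_range_id]

section Domain

variable {R : Type*} [CommRing R] [IsDomain R] {ζ : R} {d : ℕ}

theorem prod_range_pow_of_isPrimitiveRoot (hd : 0 < d) (hζ : IsPrimitiveRoot ζ d) :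
    ∏ i ∈ range d, ζ ^ i = (-1) ^ (d - 1) := by
  have vieta : (-1 : R) = (-1) ^ d * ∏ i ∈ range d, ζ ^ i := by
    simpa [eval_prod, prod_neg, hd.ne'] using
      congrArg (eval 0) (X_pow_sub_C_eq_prod hζ hd (one_pow d))
  calc ∏ i ∈ range d, ζ ^ i
      = (-1) ^ d * ((-1) ^ d * ∏ i ∈ range d, ζ ^ i) := by
        rw [← mul_assoc, pow_mul_pow_eq_one d (by norm_num), one_mul]
    _ = (-1) ^ d * -1 := by rw [← vieta]
    _ = (-1) ^ (d - 1) := by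
        obtain ⟨e, rfl⟩ := Nat.exists_eq_succ_of_ne_zero hd.ne'
        simp [pow_succ]

theorem statement2_general {n : ℕ} (hd : 0 < d) (hdn : d ∣ n) (hζ : IsPrimitiveRoot ζ d) :
    (-1 : R) ^ (n - n / d) * ζ ^ (n * (n - 1) / 2) = 1 := by
  obtain ⟨m, rfl⟩ := hdn
  have exponent : d * m - d * m / d = (d - 1) * m := by
    rw [Nat.mul_div_cancel_left m hd, Nat.sub_one_mul]
  have power : ζ ^ (d * m * (d * m - 1) / 2) = (-1) ^ ((d - 1) * m) := by
    rw [pow_mul_pred_div_two_eq_prod_range,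
      prod_range_mul_of_periodic (periodic_pow_of_pow_eq_one hζ.pow_eq_one),
      prod_range_pow_of_isPrimitiveRoot hd hζ, pow_mul]
  rw [exponent, power]
  exact pow_mul_pow_eq_one _ (by norm_num)

end Domain

/-- if `d ∣ n` (`n, d > 0`) and `ζ′ ∈ ℂ` has multiplicative order exactly `d`,
then `(−1)^{n − n/d} · ζ′^{n(n−1)/2} = 1`. -/
theorem statement2 (n d : ℕ) (hn : 0 < n) (hd : 0 < d) (hdn : d ∣ n) (ζ' : ℂ)
    (hζ' : orderOf ζ' = d) :
    (-1 : ℂ) ^ (n - n / d) * ζ' ^ (n * (n - 1) / 2) = 1 :=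
  statement2_general hd hdn (IsPrimitiveRoot.iff_orderOf.mpr hζ')
end

section
/- For i = 1, 2 let Ψ_i = (X_i, R_i, Y_i, R_i^∨) be a reduced crystallographic root datum with a choice of simple roots Δ_i = {α_1^{(i)}, …, α_l^{(i)}} ⊆ R_i (so every root of R_i is a ℤ-linear combination of Δ_i with all coefficients of the same sign, and Δ_i is linearly independent). Suppose the Cartan matrices agree: ⟨α_j^{(1)}, (α_i^{(1)})^∨⟩ = ⟨α_j^{(2)}, (α_i^{(2)})^∨⟩ for all 1 ≤ i, j ≤ l. Then the ℤ-linear isomorphism from the root lattice ℤΔ_1 to ℤΔ_2 sending α_i^{(1)} to α_i^{(2)} for each i maps R_1 bijectively onto R_2. (In other words, the Cartan matrix determines the set of roots as linear combinations of the simple roots.) -/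
/-!
Every root is obtained from the simple roots by simple reflections and negation. In coordinates
with respect to the simple roots, a simple reflection involves only the Cartan matrix, so two data
with the same Cartan matrix have the same coordinate vectors of roots.

For the first claim, let `B x y = ∑ v, ⟨x, v⟩ ⟨y, v⟩`, summed over the coroots. This form is
Weyl-invariant, whence `2 B(x, α) = ⟨x, α^∨⟩ B(α, α)`. If `β = ∑ cᵢ αᵢ` is a positive root, then
`0 < B(β, β) = ∑ cᵢ B(β, αᵢ)`, so some `αᵢ` pairs positively with `β`. Unless `β = αᵢ`, the
reflection in `αᵢ` leaves a positive coefficient of `β` unchanged, so it produces a positive root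
of smaller height.
-/

open Finset

/-- A (not necessarily reduced) root datum with roots `R`, coroots `Rv` and coroot map `cor`. The
pairing `p` of `X` with `Y` is an arbitrary integral one, so this is weaker than Mathlib's
`RootPairing`, where the pairing is perfect. -/
structure IsRootDatum {X Y : Type*} [AddCommGroup X] [AddCommGroup Y]
    (p : X →ₗ[ℤ] Y →ₗ[ℤ] ℤ) (R : Set X) (Rv : Finset Y) (cor : X → Y) : Prop where
  coroot_mem : ∀ α ∈ R, cor α ∈ Rv
  root_coroot_two : ∀ α ∈ R, p α (cor α) = 2
  reflection_mem : ∀ α ∈ R, ∀ β ∈ R, β - p β (cor α) • α ∈ R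
  coreflection_mem : ∀ α ∈ R, ∀ v ∈ Rv, v - p α v • cor α ∈ Rv

/-- A root datum in which the only integral multiples of a root `α` that are roots are `α` and
`-α`. -/
structure IsReducedRootDatum {X Y : Type*} [AddCommGroup X] [AddCommGroup Y]
    (p : X →ₗ[ℤ] Y →ₗ[ℤ] ℤ) (R : Set X) (Rv : Finset Y) (cor : X → Y) : Prop
    extends IsRootDatum p R Rv cor where
  eq_or_eq_neg : ∀ α ∈ R, ∀ β ∈ R, (∃ n : ℤ, β = n • α) → β = α ∨ β = -α

/-- A choice of simple roots `Δ` for the set of roots `R`. -/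
structure IsRootBase {X ι : Type*} [AddCommGroup X] [Fintype ι]
    (R : Set X) (Δ : ι → X) : Prop where
  mem : ∀ i, Δ i ∈ R
  linearIndependent : LinearIndependent ℤ Δ
  exists_eq_sum : ∀ β ∈ R, ∃ c : ι → ℤ,
    β = ∑ i, c i • Δ i ∧ ((∀ i, 0 ≤ c i) ∨ (∀ i, c i ≤ 0))

/-- The bilinear form `(x, y) ↦ ∑ v, ⟨x, v⟩ ⟨y, v⟩` on `X` attached to a finite set of vectors `v`
of `Y`. When these are the coroots of a root datum, it is the canonical Weyl-invariant form. -/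
def corootForm {X Y : Type*} [AddCommGroup X] [AddCommGroup Y]
    (p : X →ₗ[ℤ] Y →ₗ[ℤ] ℤ) (Rv : Finset Y) : LinearMap.BilinForm ℤ X :=
  ∑ v ∈ Rv, LinearMap.BilinForm.linMulLin (p.flip v) (p.flip v)

lemma corootForm_apply {X Y : Type*} [AddCommGroup X] [AddCommGroup Y]
    (p : X →ₗ[ℤ] Y →ₗ[ℤ] ℤ) (Rv : Finset Y) (x y : X) :
    corootForm p Rv x y = ∑ v ∈ Rv, p x v * p y v := by
  simp [corootForm, LinearMap.sum_apply]

namespace IsRootDatum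

variable {X Y : Type*} [AddCommGroup X] [AddCommGroup Y]
  {p : X →ₗ[ℤ] Y →ₗ[ℤ] ℤ} {R : Set X} {Rv : Finset Y} {cor : X → Y} {α : X}

lemma neg_mem (h : IsRootDatum p R Rv cor) (hα : α ∈ R) : -α ∈ R := by
  have hmem := h.reflection_mem α hα α hα
  rwa [h.root_coroot_two α hα, two_smul, sub_add_cancel_left] at hmem

lemma coreflection_coreflection (h : IsRootDatum p R Rv cor) (hα : α ∈ R) (v : Y) :
    v - p α v • cor α - p α (v - p α v • cor α) • cor α = v := by
  rw [map_sub, map_smul, h.root_coroot_two α hα, smul_eq_mul]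
  module

lemma corootForm_reflection (h : IsRootDatum p R Rv cor) (hα : α ∈ R) (x y : X) :
    corootForm p Rv (x - p x (cor α) • α) (y - p y (cor α) • α) = corootForm p Rv x y := by
  have reflection_pairing (z : X) (v : Y) :
      p (z - p z (cor α) • α) v = p z (v - p α v • cor α) := by
    simp only [map_sub, map_smul, LinearMap.sub_apply, LinearMap.smul_apply, smul_eq_mul]
    ring
  simp only [corootForm_apply, reflection_pairing]
  exact sum_nbij' (fun v ↦ v - p α v • cor α) (fun v ↦ v - p α v • cor α)
    (h.coreflection_mem α hα) (h.coreflection_mem α hα)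
    (fun v _ ↦ h.coreflection_coreflection hα v) (fun v _ ↦ h.coreflection_coreflection hα v)
    (fun _ _ ↦ rfl)

lemma two_mul_corootForm (h : IsRootDatum p R Rv cor) (hα : α ∈ R) (x : X) :
    2 * corootForm p Rv x α = p x (cor α) * corootForm p Rv α α := by
  have hinv := h.corootForm_reflection hα x α
  simp only [h.root_coroot_two α hα, map_sub, map_smul, LinearMap.sub_apply,
    LinearMap.smul_apply, smul_eq_mul] at hinv
  linarith

lemma corootForm_self_pos (h : IsRootDatum p R Rv cor) (hα : α ∈ R) :
    0 < corootForm p Rv α α := by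
  rw [corootForm_apply]
  refine sum_pos' (fun v _ ↦ mul_self_nonneg _) ⟨cor α, h.coroot_mem α hα, ?_⟩
  norm_num [h.root_coroot_two α hα]

lemma pairing_pos_of_corootForm_pos (h : IsRootDatum p R Rv cor) (hα : α ∈ R) {x : X}
    (hx : 0 < corootForm p Rv x α) : 0 < p x (cor α) := by
  refine pos_of_mul_pos_left ?_ (h.corootForm_self_pos hα).le
  rw [← h.two_mul_corootForm hα]
  positivity

lemma exists_simple_pairing_pos {ι : Type*} [Fintype ι] {Δ : ι → X} {c : ι → ℤ}
    (h : IsRootDatum p R Rv cor) (hΔ : ∀ i, Δ i ∈ R) (hc : 0 ≤ c) (hmem : ∑ i, c i • Δ i ∈ R) :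
    ∃ i, 0 < p (∑ j, c j • Δ j) (cor (Δ i)) := by
  set β := ∑ i, c i • Δ i with hβ
  have hsum : corootForm p Rv β β = ∑ i, c i * corootForm p Rv β (Δ i) := by
    conv_lhs => rw [hβ, map_sum, ← hβ]
    simp only [map_smul, smul_eq_mul]
  obtain ⟨i, -, hi⟩ : ∃ i ∈ univ, 0 < c i * corootForm p Rv β (Δ i) :=
    exists_lt_of_sum_lt (by simpa [← hsum] using h.corootForm_self_pos hmem)
  exact ⟨i, h.pairing_pos_of_corootForm_pos (hΔ i) (pos_of_mul_pos_right hi (hc i))⟩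

end IsRootDatum

namespace IsRootBase

variable {X ι : Type*} [AddCommGroup X] [Fintype ι] {R : Set X} {Δ : ι → X}

lemma sum_smul_injective (hΔ : IsRootBase R Δ) :
    Function.Injective fun c : ι → ℤ ↦ ∑ i, c i • Δ i :=
  linearIndependent_iff_injective_fintypeLinearCombination.mp hΔ.linearIndependent

lemma nonneg_or_nonpos (hΔ : IsRootBase R Δ) {c : ι → ℤ} (hc : ∑ i, c i • Δ i ∈ R) :
    0 ≤ c ∨ c ≤ 0 := by
  obtain ⟨d, hd, hsign⟩ := hΔ.exists_eq_sum _ hc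
  rwa [hΔ.sum_smul_injective hd]

end IsRootBase

lemma sum_sub_smul_single_smul {X ι : Type*} [AddCommGroup X] [Fintype ι] [DecidableEq ι]
    (Δ : ι → X) (c : ι → ℤ) (m : ℤ) (i : ι) :
    ∑ j, (c - m • Pi.single i 1 : ι → ℤ) j • Δ j = ∑ j, c j • Δ j - m • Δ i := by
  simp [sub_smul, Pi.single_apply]

namespace IsReducedRootDatum

variable {X Y ι : Type*} [AddCommGroup X] [AddCommGroup Y] [Fintype ι]
  {p : X →ₗ[ℤ] Y →ₗ[ℤ] ℤ} {R : Set X} {Rv : Finset Y} {cor : X → Y} {Δ : ι → X}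

lemma exists_ne_coeff_pos (h : IsReducedRootDatum p R Rv cor) (hΔ : IsRootBase R Δ)
    {c : ι → ℤ} (hc : 0 ≤ c) (hmem : ∑ j, c j • Δ j ∈ R) {i : ι} (hne : ∑ j, c j • Δ j ≠ Δ i) :
    ∃ j ≠ i, 0 < c j := by
  classical
  by_contra! hle
  have hmul : ∑ j, c j • Δ j = c i • Δ i :=
    Fintype.sum_eq_single i fun j hj ↦ by rw [(hle j hj).antisymm (hc j), zero_smul]
  have hneg := (h.eq_or_eq_neg _ (hΔ.mem i) _ hmem ⟨_, hmul⟩).resolve_left hne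
  have hcoeff : c = Pi.single i (-1) :=
    hΔ.sum_smul_injective (hneg.trans (by simp [Pi.single_apply]))
  simpa [hcoeff] using hc i

lemma reflection_coeff_nonneg [DecidableEq ι] (h : IsReducedRootDatum p R Rv cor)
    (hΔ : IsRootBase R Δ) {c : ι → ℤ} (hc : 0 ≤ c) (hmem : ∑ j, c j • Δ j ∈ R) {i : ι}
    (hne : ∑ j, c j • Δ j ≠ Δ i) :
    0 ≤ c - p (∑ j, c j • Δ j) (cor (Δ i)) • Pi.single i 1 := by
  obtain ⟨j, hji, hcj⟩ := h.exists_ne_coeff_pos hΔ hc hmem hne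
  refine (hΔ.nonneg_or_nonpos ?_).resolve_right fun hle ↦ hcj.not_ge ?_
  · rw [sum_sub_smul_single_smul]
    exact h.reflection_mem _ (hΔ.mem i) _ hmem
  · simpa [hji] using hle j

lemma induction_on_reflect_of_nonneg (h : IsReducedRootDatum p R Rv cor) (hΔ : IsRootBase R Δ)
    {P : X → Prop} (simple : ∀ i, P (Δ i))
    (reflect : ∀ i, ∀ β ∈ R, P β → P (β - p β (cor (Δ i)) • Δ i))
    {c : ι → ℤ} (hc : 0 ≤ c) (hmem : ∑ i, c i • Δ i ∈ R) : P (∑ i, c i • Δ i) := by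
  classical
  induction hn : (∑ i, c i).toNat using Nat.strong_induction_on generalizing c with
  | _ n ih =>
    obtain ⟨i, hi⟩ := h.exists_simple_pairing_pos hΔ.mem hc hmem
    by_cases hne : ∑ j, c j • Δ j = Δ i
    · exact hne ▸ simple i
    set β := ∑ j, c j • Δ j
    set d : ι → ℤ := c - p β (cor (Δ i)) • Pi.single i 1 with hd
    have hdβ : ∑ j, d j • Δ j = β - p β (cor (Δ i)) • Δ i := sum_sub_smul_single_smul ..
    have hd_nonneg : 0 ≤ d := h.reflection_coeff_nonneg hΔ hc hmem hne
    have hd_mem : ∑ j, d j • Δ j ∈ R := hdβ ▸ h.reflection_mem _ (hΔ.mem i) _ hmem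
    have hheight : ∑ j, d j = ∑ j, c j - p β (cor (Δ i)) := by simp [hd, Pi.single_apply]
    have hd_sum_nonneg : 0 ≤ ∑ j, d j := sum_nonneg fun j _ ↦ hd_nonneg j
    have hPd : P (β - p β (cor (Δ i)) • Δ i) := hdβ ▸ ih _ (by lia) hd_nonneg hd_mem rfl
    convert reflect i _ (hdβ ▸ hd_mem) hPd using 1
    simp only [map_sub, map_smul, LinearMap.sub_apply, LinearMap.smul_apply, smul_eq_mul,
      h.root_coroot_two _ (hΔ.mem i)]
    module

theorem induction_on_reflect (h : IsReducedRootDatum p R Rv cor) (hΔ : IsRootBase R Δ)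
    {P : X → Prop} (simple : ∀ i, P (Δ i)) (neg : ∀ β ∈ R, P β → P (-β))
    (reflect : ∀ i, ∀ β ∈ R, P β → P (β - p β (cor (Δ i)) • Δ i))
    {β : X} (hβ : β ∈ R) : P β := by
  obtain ⟨c, rfl, hc | hc⟩ := hΔ.exists_eq_sum β hβ
  · exact h.induction_on_reflect_of_nonneg hΔ simple reflect hc hβ
  · have hneg : ∑ i, (-c) i • Δ i = -∑ i, c i • Δ i := by simp
    have hmem : ∑ i, (-c) i • Δ i ∈ R := hneg ▸ h.neg_mem hβ
    have hP := h.induction_on_reflect_of_nonneg hΔ simple reflect (neg_nonneg.mpr hc) hmem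
    simpa [hneg] using neg _ hmem hP

end IsReducedRootDatum

section SameCartanMatrix

variable {X₁ Y₁ X₂ Y₂ ι : Type*} [AddCommGroup X₁] [AddCommGroup Y₁] [AddCommGroup X₂]
  [AddCommGroup Y₂] [Fintype ι]
  {p₁ : X₁ →ₗ[ℤ] Y₁ →ₗ[ℤ] ℤ} {R₁ : Set X₁} {R₁v : Finset Y₁} {cor₁ : X₁ → Y₁} {Δ₁ : ι → X₁}
  {p₂ : X₂ →ₗ[ℤ] Y₂ →ₗ[ℤ] ℤ} {R₂ : Set X₂} {R₂v : Finset Y₂} {cor₂ : X₂ → Y₂} {Δ₂ : ι → X₂}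

lemma pairing_sum_eq_of_cartan_eq
    (hcartan : ∀ i j, p₁ (Δ₁ j) (cor₁ (Δ₁ i)) = p₂ (Δ₂ j) (cor₂ (Δ₂ i))) (c : ι → ℤ) (i : ι) :
    p₁ (∑ j, c j • Δ₁ j) (cor₁ (Δ₁ i)) = p₂ (∑ j, c j • Δ₂ j) (cor₂ (Δ₂ i)) := by
  simp only [map_sum, map_smul, LinearMap.sum_apply, LinearMap.smul_apply, hcartan]

lemma sum_smul_mem_of_cartan_eq (h₁ : IsReducedRootDatum p₁ R₁ R₁v cor₁)
    (h₂ : IsRootDatum p₂ R₂ R₂v cor₂) (hΔ₁ : IsRootBase R₁ Δ₁) (hΔ₂ : ∀ i, Δ₂ i ∈ R₂)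
    (hcartan : ∀ i j, p₁ (Δ₁ j) (cor₁ (Δ₁ i)) = p₂ (Δ₂ j) (cor₂ (Δ₂ i)))
    {c : ι → ℤ} (hc : ∑ i, c i • Δ₁ i ∈ R₁) : ∑ i, c i • Δ₂ i ∈ R₂ := by
  classical
  suffices ∃ d : ι → ℤ, ∑ i, c i • Δ₁ i = ∑ i, d i • Δ₁ i ∧ ∑ i, d i • Δ₂ i ∈ R₂ by
    obtain ⟨d, hd, hmem⟩ := this
    rwa [hΔ₁.sum_smul_injective hd]
  refine h₁.induction_on_reflect hΔ₁
    (P := fun β ↦ ∃ d : ι → ℤ, β = ∑ i, d i • Δ₁ i ∧ ∑ i, d i • Δ₂ i ∈ R₂)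
    (fun i ↦ ⟨Pi.single i 1, ?_, ?_⟩) ?_ ?_ hc
  · simp [Pi.single_apply]
  · simpa [Pi.single_apply] using hΔ₂ i
  · rintro _ - ⟨d, rfl, hd⟩
    exact ⟨-d, by simp, by simpa using h₂.neg_mem hd⟩
  · rintro i _ - ⟨d, rfl, hd⟩
    refine ⟨d - p₁ (∑ j, d j • Δ₁ j) (cor₁ (Δ₁ i)) • Pi.single i 1,
      (sum_sub_smul_single_smul ..).symm, ?_⟩
    rw [sum_sub_smul_single_smul, pairing_sum_eq_of_cartan_eq hcartan]
    exact h₂.reflection_mem _ (hΔ₂ i) _ hd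

lemma sum_smul_mem_iff_of_cartan_eq (h₁ : IsReducedRootDatum p₁ R₁ R₁v cor₁)
    (h₂ : IsReducedRootDatum p₂ R₂ R₂v cor₂) (hΔ₁ : IsRootBase R₁ Δ₁) (hΔ₂ : IsRootBase R₂ Δ₂)
    (hcartan : ∀ i j, p₁ (Δ₁ j) (cor₁ (Δ₁ i)) = p₂ (Δ₂ j) (cor₂ (Δ₂ i))) (c : ι → ℤ) :
    ∑ i, c i • Δ₁ i ∈ R₁ ↔ ∑ i, c i • Δ₂ i ∈ R₂ :=
  ⟨sum_smul_mem_of_cartan_eq h₁ h₂.toIsRootDatum hΔ₁ hΔ₂.mem hcartan,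
    sum_smul_mem_of_cartan_eq h₂ h₁.toIsRootDatum hΔ₂ hΔ₁.mem fun i j ↦ (hcartan i j).symm⟩

theorem statement14_general (h₁ : IsReducedRootDatum p₁ R₁ R₁v cor₁)
    (h₂ : IsReducedRootDatum p₂ R₂ R₂v cor₂) (hΔ₁ : IsRootBase R₁ Δ₁) (hΔ₂ : IsRootBase R₂ Δ₂)
    (hcartan : ∀ i j, p₁ (Δ₁ j) (cor₁ (Δ₁ i)) = p₂ (Δ₂ j) (cor₂ (Δ₂ i))) :
    ∃ φ : Submodule.span ℤ (Set.range Δ₁) →ₗ[ℤ] X₂,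
      (∀ i, φ ⟨Δ₁ i, Submodule.subset_span ⟨i, rfl⟩⟩ = Δ₂ i) ∧
      ∀ ψ : Submodule.span ℤ (Set.range Δ₁) →ₗ[ℤ] X₂,
        (∀ i, ψ ⟨Δ₁ i, Submodule.subset_span ⟨i, rfl⟩⟩ = Δ₂ i) →
        Set.BijOn (fun x ↦ ψ x) {x : Submodule.span ℤ (Set.range Δ₁) | (x : X₁) ∈ R₁} R₂ := by
  let b := Module.Basis.span hΔ₁.linearIndependent
  have hb (i : ι) : b i = ⟨Δ₁ i, Submodule.subset_span ⟨i, rfl⟩⟩ :=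
    Module.Basis.span_apply hΔ₁.linearIndependent i
  refine ⟨b.constr ℤ Δ₂, fun i ↦ by rw [← hb, b.constr_basis], fun ψ hψ ↦ ?_⟩
  have hcoe (c : ι → ℤ) : (b.equivFun.symm c : X₁) = ∑ i, c i • Δ₁ i := by
    simp [b.equivFun_symm_apply, hb]
  have hψ_sum (c : ι → ℤ) : ψ (b.equivFun.symm c) = ∑ i, c i • Δ₂ i := by
    simp only [b.equivFun_symm_apply, map_sum, map_smul, hb, hψ]
  have hmem (c : ι → ℤ) : (b.equivFun.symm c : X₁) ∈ R₁ ↔ ψ (b.equivFun.symm c) ∈ R₂ := by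
    rw [hcoe, hψ_sum, sum_smul_mem_iff_of_cartan_eq h₁ h₂ hΔ₁ hΔ₂ hcartan]
  refine ⟨fun x hx ↦ ?_, fun x _ y _ hxy ↦ ?_, fun β hβ ↦ ?_⟩
  · obtain ⟨c, rfl⟩ := b.equivFun.symm.surjective x
    exact (hmem c).mp hx
  · obtain ⟨c, rfl⟩ := b.equivFun.symm.surjective x
    obtain ⟨d, rfl⟩ := b.equivFun.symm.surjective y
    have hcd : c = d := hΔ₂.sum_smul_injective (by simpa only [hψ_sum] using hxy)
    rw [hcd]
  · obtain ⟨c, rfl, -⟩ := hΔ₂.exists_eq_sum β hβ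
    exact ⟨b.equivFun.symm c, (hmem c).mpr (hψ_sum c ▸ hβ), hψ_sum c⟩

end SameCartanMatrix

/-- Lemma `CequivLincomb`(a): if two reduced crystallographic root data with
chosen simple roots `Δ₁ = (α_i^{(1)})`, `Δ₂ = (α_i^{(2)})` have the same Cartan matrix, then
the `ℤ`-linear map from the root lattice `ℤΔ₁` sending `α_i^{(1)}` to `α_i^{(2)}` maps
`R₁` bijectively onto `R₂`. -/
theorem statement14
    {X₁ Y₁ X₂ Y₂ : Type*}
    [AddCommGroup X₁] [Module ℤ X₁] [Module.Free ℤ X₁] [Module.Finite ℤ X₁]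
    [AddCommGroup Y₁] [Module ℤ Y₁] [Module.Free ℤ Y₁] [Module.Finite ℤ Y₁]
    [AddCommGroup X₂] [Module ℤ X₂] [Module.Free ℤ X₂] [Module.Finite ℤ X₂]
    [AddCommGroup Y₂] [Module ℤ Y₂] [Module.Free ℤ Y₂] [Module.Finite ℤ Y₂]
    -- perfect pairings
    (p₁ : X₁ →ₗ[ℤ] Y₁ →ₗ[ℤ] ℤ) (p₂ : X₂ →ₗ[ℤ] Y₂ →ₗ[ℤ] ℤ)
    (hp₁ : Function.Bijective p₁) (hp₁' : Function.Bijective p₁.flip)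
    (hp₂ : Function.Bijective p₂) (hp₂' : Function.Bijective p₂.flip)
    -- first root datum
    (R₁ : Finset X₁) (R₁v : Finset Y₁) (cor₁ : X₁ → Y₁)
    (hcor₁ : Set.BijOn cor₁ ↑R₁ ↑R₁v)
    (hpair₁ : ∀ α ∈ R₁, p₁ α (cor₁ α) = 2)
    (hrefl₁ : ∀ α ∈ R₁, ∀ β ∈ R₁, β - p₁ β (cor₁ α) • α ∈ R₁)
    (hcorefl₁ : ∀ α ∈ R₁, ∀ y ∈ R₁v, y - p₁ α y • cor₁ α ∈ R₁v)
    (hred₁ : ∀ α ∈ R₁, ∀ β ∈ R₁, (∃ n : ℤ, β = n • α) → β = α ∨ β = -α)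
    -- second root datum
    (R₂ : Finset X₂) (R₂v : Finset Y₂) (cor₂ : X₂ → Y₂)
    (hcor₂ : Set.BijOn cor₂ ↑R₂ ↑R₂v)
    (hpair₂ : ∀ α ∈ R₂, p₂ α (cor₂ α) = 2)
    (hrefl₂ : ∀ α ∈ R₂, ∀ β ∈ R₂, β - p₂ β (cor₂ α) • α ∈ R₂)
    (hcorefl₂ : ∀ α ∈ R₂, ∀ y ∈ R₂v, y - p₂ α y • cor₂ α ∈ R₂v)
    (hred₂ : ∀ α ∈ R₂, ∀ β ∈ R₂, (∃ n : ℤ, β = n • α) → β = α ∨ β = -α)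
    -- chosen simple roots, indexed by `Fin l`
    (l : ℕ)
    (Δ₁ : Fin l → X₁) (hΔ₁R : ∀ i, Δ₁ i ∈ R₁) (hΔ₁li : LinearIndependent ℤ Δ₁)
    (hΔ₁base : ∀ β ∈ R₁, ∃ c : Fin l → ℤ,
      β = ∑ i, c i • Δ₁ i ∧ ((∀ i, 0 ≤ c i) ∨ (∀ i, c i ≤ 0)))
    (Δ₂ : Fin l → X₂) (hΔ₂R : ∀ i, Δ₂ i ∈ R₂) (hΔ₂li : LinearIndependent ℤ Δ₂)
    (hΔ₂base : ∀ β ∈ R₂, ∃ c : Fin l → ℤ,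
      β = ∑ i, c i • Δ₂ i ∧ ((∀ i, 0 ≤ c i) ∨ (∀ i, c i ≤ 0)))
    -- the Cartan matrices agree
    (hcartan : ∀ i j, p₁ (Δ₁ j) (cor₁ (Δ₁ i)) = p₂ (Δ₂ j) (cor₂ (Δ₂ i))) :
    ∃ φ : Submodule.span ℤ (Set.range Δ₁) →ₗ[ℤ] X₂,
      (∀ i, φ ⟨Δ₁ i, Submodule.subset_span ⟨i, rfl⟩⟩ = Δ₂ i) ∧
      ∀ ψ : Submodule.span ℤ (Set.range Δ₁) →ₗ[ℤ] X₂,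
        (∀ i, ψ ⟨Δ₁ i, Submodule.subset_span ⟨i, rfl⟩⟩ = Δ₂ i) →
        Set.BijOn (fun x => ψ x) {x : Submodule.span ℤ (Set.range Δ₁) | (x : X₁) ∈ R₁} ↑R₂ := by
  -- `p₁ β (cor₁ α) • α` is a multiple for the canonical `ℤ`-action, whereas `p₁` and
  -- `LinearIndependent` refer to the given `Module ℤ` instances.
  obtain rfl : ‹Module ℤ X₁› = AddCommGroup.toIntModule X₁ := Subsingleton.elim _ _
  obtain rfl : ‹Module ℤ Y₁› = AddCommGroup.toIntModule Y₁ := Subsingleton.elim _ _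
  obtain rfl : ‹Module ℤ X₂› = AddCommGroup.toIntModule X₂ := Subsingleton.elim _ _
  obtain rfl : ‹Module ℤ Y₂› = AddCommGroup.toIntModule Y₂ := Subsingleton.elim _ _
  exact statement14_general ⟨⟨hcor₁.mapsTo, hpair₁, hrefl₁, hcorefl₁⟩, hred₁⟩
    ⟨⟨hcor₂.mapsTo, hpair₂, hrefl₂, hcorefl₂⟩, hred₂⟩
    ⟨hΔ₁R, hΔ₁li, hΔ₁base⟩ ⟨hΔ₂R, hΔ₂li, hΔ₂base⟩ hcartan
end

section
/- Let G̃ and G be groups, π : G̃ → G a surjective group homomorphism whose kernel K is contained in the center of G̃, F̃ : G̃ → G̃ a group homomorphism, and F : G → G a group homomorphism with F ∘ π = π ∘ F̃. Then the image under π of the fixed-point subgroup G̃^{F̃} = { x ∈ G̃ : F̃(x) = x } is a normal subgroup of the fixed-point subgroup G^F = { g ∈ G : F(g) = g }. -/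
/-!
If `π y` is fixed by `F`, then `y⁻¹ * Ft y` lies in the kernel of `π`, hence commutes with every
`x` fixed by `Ft`. Since `Ft (y * x * y⁻¹)` is the conjugate of `x` by `Ft y = y * (y⁻¹ * Ft y)`,
it equals `y * x * y⁻¹`. So the preimage of `G^F` normalizes the fixed points of `Ft`; apply `π`.
-/

/-- The fixed-point subgroup `G^F = { g : G | F g = g }` of a group endomorphism `F`. -/
def fixedSubgroup {G : Type*} [Group G] (F : G →* G) : Subgroup G where
  carrier := {g : G | F g = g}
  one_mem' := map_one F
  mul_mem' := by
    intro a b (ha : F a = a) (hb : F b = b)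
    show F (a * b) = a * b
    rw [map_mul, ha, hb]
  inv_mem' := by
    intro a (ha : F a = a)
    show F a⁻¹ = a⁻¹
    rw [map_inv, ha]

section FixedSubgroup

variable {G H : Type*} [Group G] [Group H]

theorem mem_fixedSubgroup {F : G →* G} {g : G} : g ∈ fixedSubgroup F ↔ F g = g :=
  Iff.rfl

theorem conj_mem_fixedSubgroup_iff {F : G →* G} {x y : G} (hx : x ∈ fixedSubgroup F) :
    y * x * y⁻¹ ∈ fixedSubgroup F ↔ Commute (y⁻¹ * F y) x := by
  have hFconj : F (y * x * y⁻¹) = F y * x * (F y)⁻¹ := by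
    rw [map_mul, map_mul, map_inv, mem_fixedSubgroup.mp hx]
  calc y * x * y⁻¹ ∈ fixedSubgroup F
      ↔ F y * x * (F y)⁻¹ = y * x * y⁻¹ := by rw [mem_fixedSubgroup, hFconj]
    _ ↔ F y * x = y * x * y⁻¹ * F y := mul_inv_eq_iff_eq_mul
    _ ↔ y⁻¹ * (F y * x) = x * (y⁻¹ * F y) := by
      simp only [inv_mul_eq_iff_eq_mul, mul_assoc]
    _ ↔ Commute (y⁻¹ * F y) x := by rw [commute_iff_eq, mul_assoc y⁻¹]

variable {f : G →* H} {E : G →* G} {F : H →* H}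

theorem map_fixedSubgroup_le (hcomm : ∀ x, F (f x) = f (E x)) :
    (fixedSubgroup E).map f ≤ fixedSubgroup F := by
  rintro _ ⟨x, hx, rfl⟩
  rw [mem_fixedSubgroup, hcomm, mem_fixedSubgroup.mp hx]

theorem inv_mul_apply_mem_ker_iff (hcomm : ∀ x, F (f x) = f (E x)) {y : G} :
    y⁻¹ * E y ∈ f.ker ↔ f y ∈ fixedSubgroup F := by
  rw [← f.eq_iff, mem_fixedSubgroup, hcomm]

theorem comap_fixedSubgroup_le_normalizer
    (hker : f.ker ≤ Subgroup.centralizer (fixedSubgroup E))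
    (hcomm : ∀ x, F (f x) = f (E x)) :
    (fixedSubgroup F).comap f ≤ Subgroup.normalizer (fixedSubgroup E) := by
  refine Subgroup.le_normalizer_iff.mpr fun y hy x hx ↦ (conj_mem_fixedSubgroup_iff hx).mpr ?_
  have hyker : y⁻¹ * E y ∈ f.ker := (inv_mul_apply_mem_ker_iff hcomm).mpr hy
  exact (Subgroup.mem_centralizer_iff.mp (hker hyker) x hx).symm

end FixedSubgroup

theorem statement15_general {Gt G : Type*} [Group Gt] [Group G] (π : Gt →* G)
    (Ft : Gt →* Gt) (F : G →* G) (hrange : fixedSubgroup F ≤ π.range)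
    (hker : π.ker ≤ Subgroup.centralizer (fixedSubgroup Ft))
    (hcomm : ∀ x : Gt, F (π x) = π (Ft x)) :
    ((fixedSubgroup Ft).map π ≤ fixedSubgroup F) ∧
      (((fixedSubgroup Ft).map π).subgroupOf (fixedSubgroup F)).Normal := by
  refine ⟨map_fixedSubgroup_le hcomm, Subgroup.normal_subgroupOf_of_le_normalizer ?_⟩
  calc fixedSubgroup F
      = ((fixedSubgroup F).comap π).map π := (Subgroup.map_comap_eq_self hrange).symm
    _ ≤ (Subgroup.normalizer (fixedSubgroup Ft)).map π :=
      Subgroup.map_mono (comap_fixedSubgroup_le_normalizer hker hcomm)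
    _ ≤ Subgroup.normalizer ((fixedSubgroup Ft).map π) := Subgroup.le_normalizer_map π

/-- part of Lemma `lemma:finfactor`: if `π : G̃ → G` is surjective with
central kernel, `F̃ : G̃ → G̃` and `F : G → G` satisfy `F ∘ π = π ∘ F̃`, then
`π(G̃^{F̃})` is a normal subgroup of `G^F`. -/
theorem statement15 {Gt G : Type*} [Group Gt] [Group G] (π : Gt →* G)
    (hsurj : Function.Surjective π) (hker : π.ker ≤ Subgroup.center Gt)
    (Ft : Gt →* Gt) (F : G →* G) (hcomm : ∀ x : Gt, F (π x) = π (Ft x)) :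
    ((fixedSubgroup Ft).map π ≤ fixedSubgroup F) ∧
      (((fixedSubgroup Ft).map π).subgroupOf (fixedSubgroup F)).Normal := by
  exact statement15_general π Ft F (fun g _ ↦ hsurj g)
    (hker.trans (Subgroup.center_le_centralizer _)) hcomm
end

section
/- Let k be an algebraically closed field of characteristic p > 0, let G be a finite group, and let H be a normal subgroup of G whose index [G : H] is prime to p. Let U be a Sylow p-subgroup of G (so U ≤ H), and let V be a finite-dimensional irreducible kG-module. Assume that the subspace V^U = { v ∈ V : u·v = v for all u ∈ U } of U-fixed vectors is one-dimensional. Then the restriction of V to H is an irreducible kH-module. -/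
open Representation

/-!
The index of `H` being prime to `p`, the image of `U` in `G ⧸ H` is trivial, so `U ≤ H`. A finite
`p`-group acting linearly in characteristic `p` on a nonzero space fixes a nonzero vector; hence
every nonzero `H`-stable subspace `W` of `V` meets the line `V^U`, and therefore contains it. As `H`
is normal, the translates of `W` under `G` are again `H`-stable and nonzero, so `V^U` lies in their
intersection. This intersection is a nonzero `G`-stable subspace of `W`, and irreducibility of `V`
over `G` forces `W = V`.
-/

section FixedPoints

variable {p : ℕ} [Fact p.Prime] {P : Type*} [Group P] [Finite P]

theorem fixedPoints_addSubgroup_ne_bot_of_isPGroup {A : Type*} [AddCommGroup A]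
    [DistribMulAction P A] [Nontrivial A] (hP : IsPGroup p P) (hA : IsPGroup p (Multiplicative A)) :
    FixedPoints.addSubgroup P A ≠ ⊥ := by
  obtain ⟨a, ha⟩ := exists_ne (0 : A)
  -- `A` may be infinite, so fixed points are counted in the finite subgroup spanned by an orbit.
  let N : AddSubgroup A := AddSubgroup.closure (MulAction.orbit P a)
  have haN : a ∈ N := AddSubgroup.subset_closure (MulAction.mem_orbit_self a)
  have h_smul (g : P) : N ≤ N.comap (DistribSMul.toAddMonoidHom A g) :=
    (AddSubgroup.closure_le _).2 fun x hx =>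
      AddSubgroup.subset_closure (MulAction.mem_orbit_of_mem_orbit g hx)
  let S : SubMulAction P A := { carrier := N, smul_mem' := fun g x hx => h_smul g hx }
  have h_orbit : Finite (MulAction.orbit P a) := Set.finite_range _
  have h_torsion : IsAddTorsion A := fun x =>
    isOfFinOrder_ofAdd_iff.1 (hA.isOfFinOrder (Fact.out : p.Prime).ne_zero (.ofAdd x))
  have h_finite : Finite S := AddCommGroup.finite_of_fg_isAddTorsion N (h_torsion.addSubgroup N)
  have h_dvd : p ∣ Nat.card S := by
    have h_order : addOrderOf (⟨a, haN⟩ : N) ∣ Nat.card N := addOrderOf_dvd_natCard _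
    rw [AddSubgroup.addOrderOf_mk] at h_order
    exact (hA.dvd_orderOf (g := .ofAdd a) ha).trans h_order
  obtain ⟨b, hb, h_ne⟩ := hP.exists_fixed_point_of_prime_dvd_card_of_fixed_point S h_dvd
    (a := ⟨0, N.zero_mem⟩) fun g => Subtype.ext (smul_zero g)
  exact AddSubgroup.ne_bot_iff_exists_ne_zero.2
    ⟨⟨b, fun g => congrArg Subtype.val (hb g)⟩,
      fun h => h_ne (Subtype.ext (congrArg Subtype.val h).symm)⟩

theorem invariants_ne_bot_of_isPGroup {k : Type*} [CommRing k] [CharP k p] {V : Type*}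
    [AddCommGroup V] [Module k V] [Nontrivial V] (hP : IsPGroup p P) (ρ : Representation k P V) :
    ρ.invariants ≠ ⊥ := by
  let : DistribMulAction P V := DistribMulAction.compHom V ρ
  let : Module (ZMod p) V := AddCommGroup.zmodModule fun v => by
    rw [← Nat.cast_smul_eq_nsmul k, CharP.cast_eq_zero, zero_smul]
  obtain ⟨v, hv⟩ := AddSubgroup.ne_bot_iff_exists_ne_zero.1
    (fixedPoints_addSubgroup_ne_bot_of_isPGroup hP (ZModModule.isPGroup_multiplicative (G := V)))
  exact (Submodule.ne_bot_iff _).2 ⟨v, v.2, fun h => hv (Subtype.ext h)⟩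

theorem invariants_le_of_isAtom {k : Type*} [CommRing k] [CharP k p] {V : Type*} [AddCommGroup V]
    [Module k V] (hP : IsPGroup p P) {ρ : Representation k P V} (hρ : IsAtom ρ.invariants)
    (W : Subrepresentation ρ) (hW : W.toSubmodule ≠ ⊥) : ρ.invariants ≤ W.toSubmodule := by
  have : Nontrivial W.toSubmodule := Submodule.nontrivial_iff_ne_bot.2 hW
  obtain ⟨w, hw, hw_ne⟩ := Submodule.exists_mem_ne_zero_of_ne_bot
    (invariants_ne_bot_of_isPGroup hP W.toRepresentation)
  have hw_fixed : (w : V) ∈ ρ.invariants := fun g => congrArg Subtype.val (hw g)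
  rw [← hρ.not_disjoint_iff_le, Submodule.disjoint_def]
  exact fun h => hw_ne (Subtype.ext (h w hw_fixed w.2))

end FixedPoints

section Core

variable {k G V : Type*} [Semiring k] [Monoid G] [AddCommMonoid V] [Module k V]

/-- The largest subrepresentation of `ρ` contained in the subspace `W`, encoded as the vectors whose
whole `G`-orbit lies in `W`. -/
def subrepresentationCore (ρ : Representation k G V) (W : Submodule k V) :
    Subrepresentation ρ where
  toSubmodule := ⨅ g : G, W.comap (ρ g)
  apply_mem_toSubmodule g v hv := by
    simp only [Submodule.mem_iInf, Submodule.mem_comap] at hv ⊢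
    intro g'
    simpa using hv (g' * g)

theorem subrepresentationCore_le (ρ : Representation k G V) (W : Submodule k V) :
    (subrepresentationCore ρ W).toSubmodule ≤ W := fun v hv => by
  simpa using (Submodule.mem_iInf _).1 hv 1

end Core

section NormalSubgroup

variable {G : Type*} [Group G] {H : Subgroup G} [H.Normal]

theorem le_of_isPGroup_of_coprime_index {p : ℕ} (hindex : H.index.Coprime p) {U : Subgroup G}
    (hU : IsPGroup p U) : U ≤ H := by
  intro u hu
  have h_order : (orderOf u).Coprime H.index := by
    simpa only [Subgroup.orderOf_mk] using hU.orderOf_coprime hindex.symm ⟨u, hu⟩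
  have h_mk : orderOf (u : G ⧸ H) = 1 := Nat.eq_one_of_dvd_coprimes h_order
    (orderOf_map_dvd (QuotientGroup.mk' H) u) (orderOf_dvd_natCard _)
  rwa [orderOf_eq_one_iff, QuotientGroup.eq_one_iff] at h_mk

section Translate

variable {k V : Type*} [Semiring k] [AddCommMonoid V] [Module k V] {ρ : Representation k G V}

/-- The translate `g⁻¹ W` of an `H`-stable subspace `W`, for `H` normal in `G`; it is encoded as a
preimage under `ρ g`. -/
def subrepresentationTranslate (W : Subrepresentation (ρ.comp H.subtype)) (g : G) :
    Subrepresentation (ρ.comp H.subtype) where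
  toSubmodule := W.toSubmodule.comap (ρ g)
  apply_mem_toSubmodule h v hv := by
    have := W.apply_mem_toSubmodule (MulAut.conjNormal g h) hv
    simpa [← Module.End.mul_apply, ← map_mul] using this

theorem subrepresentationTranslate_toSubmodule_ne_bot {W : Subrepresentation (ρ.comp H.subtype)}
    (hW : W.toSubmodule ≠ ⊥) (g : G) : (subrepresentationTranslate W g).toSubmodule ≠ ⊥ := by
  obtain ⟨w, hw, h_ne⟩ := Submodule.exists_mem_ne_zero_of_ne_bot hW
  refine (Submodule.ne_bot_iff _).2 ⟨ρ g⁻¹ w, ?_, fun h => h_ne ?_⟩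
  · simpa [subrepresentationTranslate] using hw
  · simpa using congrArg (ρ g) h

end Translate

theorem isIrreducible_comp_subtype_of_le {k V : Type*} [Field k] [AddCommGroup V] [Module k V]
    {ρ : Representation k G V} (hρ : ρ.IsIrreducible) {F : Submodule k V} (hF : F ≠ ⊥)
    (hF_le : ∀ W : Subrepresentation (ρ.comp H.subtype), W.toSubmodule ≠ ⊥ → F ≤ W.toSubmodule) :
    IsIrreducible (ρ.comp H.subtype) where
  exists_pair_ne :=
    ⟨⊥, ⊤, fun h => hF (le_bot_iff.1 (le_top.trans_eq
      (congrArg Subrepresentation.toSubmodule h).symm))⟩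
  eq_bot_or_eq_top W := by
    refine or_iff_not_imp_left.2 fun hW => ?_
    have hW_ne : W.toSubmodule ≠ ⊥ := fun h => hW (Subrepresentation.toSubmodule_injective h)
    have hF_core : F ≤ (subrepresentationCore ρ W.toSubmodule).toSubmodule :=
      le_iInf fun g => hF_le _ (subrepresentationTranslate_toSubmodule_ne_bot hW_ne g)
    have h_core : subrepresentationCore ρ W.toSubmodule = ⊤ :=
      (hρ.eq_bot_or_eq_top _).resolve_left fun h => hF (le_bot_iff.1
        (hF_core.trans_eq (congrArg Subrepresentation.toSubmodule h)))
    refine Subrepresentation.toSubmodule_injective (top_le_iff.1 ?_)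
    exact (congrArg Subrepresentation.toSubmodule h_core).ge.trans (subrepresentationCore_le ρ _)

end NormalSubgroup

theorem iInf_eqLocus_id_eq_invariants {k G V : Type*} [CommRing k] [Group G] [AddCommGroup V]
    [Module k V] (ρ : Representation k G V) :
    ⨅ g : G, LinearMap.eqLocus (ρ g) LinearMap.id = ρ.invariants := by
  ext v
  simp only [Submodule.mem_iInf, LinearMap.mem_eqLocus, LinearMap.id_apply, mem_invariants]

theorem statement19_general {k : Type*} [Field k] (p : ℕ) [Fact p.Prime] [CharP k p]
    {G : Type*} [Group G] (H : Subgroup G) [H.Normal] (U : Subgroup G) [Finite U]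
    (hU : IsPGroup p U) (hUH : U ≤ H) {V : Type*} [AddCommGroup V] [Module k V]
    (ρ : Representation k G V) (hirr : IsSimpleModule (MonoidAlgebra k G) ρ.asModule)
    (hfix : Module.finrank k (invariants (ρ.comp U.subtype)) = 1) :
    IsSimpleModule (MonoidAlgebra k H)
      (Representation.asModule (ρ.comp H.subtype : Representation k H V)) := by
  rw [← irreducible_iff_isSimpleModule_asModule] at hirr ⊢
  have h_atom : IsAtom (invariants (ρ.comp U.subtype)) :=
    isSimpleModule_iff_isAtom.1 (isSimpleModule_iff_finrank_eq_one.2 hfix)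
  refine isIrreducible_comp_subtype_of_le hirr h_atom.ne_bot fun W hW => ?_
  let W_restrict : Subrepresentation (ρ.comp U.subtype) :=
    ⟨W.toSubmodule, fun u _ hv => W.apply_mem_toSubmodule ⟨u, hUH u.2⟩ hv⟩
  exact invariants_le_of_isAtom hU h_atom W_restrict hW

/-- Proposition `prop:ext`: let `k` be algebraically closed of characteristic
`p > 0`, `G` a finite group, `H ⊴ G` of index prime to `p`, `U` a Sylow `p`-subgroup of `G`,
and `V` a finite-dimensional irreducible `kG`-module whose subspace of `U`-fixed vectors is
one-dimensional. Then `V` restricted to `H` is an irreducible `kH`-module. -/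
theorem statement19 {k : Type*} [Field k] [IsAlgClosed k] (p : ℕ) (hp : 0 < p) [CharP k p]
    {G : Type*} [Group G] [Fintype G] (H : Subgroup G) [H.Normal]
    (hindex : Nat.Coprime H.index p) (U : Sylow p G)
    {V : Type*} [AddCommGroup V] [Module k V] [FiniteDimensional k V]
    (ρ : Representation k G V)
    (hirr : IsSimpleModule (MonoidAlgebra k G) ρ.asModule)
    (hfix : Module.finrank k
      ↥(⨅ u : (U : Subgroup G), LinearMap.eqLocus (ρ u) (LinearMap.id (R := k) (M := V))) = 1) :
    IsSimpleModule (MonoidAlgebra k H)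
      (Representation.asModule (ρ.comp H.subtype : Representation k H V)) := by
  have : Fact p.Prime := ⟨(CharP.char_is_prime_or_zero k p).resolve_right hp.ne'⟩
  exact statement19_general p H U U.2 (le_of_isPGroup_of_coprime_index hindex U.2) ρ hirr
    (iInf_eqLocus_id_eq_invariants (ρ.comp (U : Subgroup G).subtype) ▸ hfix)
end
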